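/- The open set {(x,y) ∈ T_e° : φ₂ᵈ(x,y) + φ₁ᵈ(x,y) ≠ 0} has exactly 3 connected components. -/

import Mathlib

open Real

/-- The second (symmetric) Dirichlet eigenfunction of the equilateral triangle. -/
noncomputable def phi2D (x y : ℝ) : ℝ :=
  sin (2 * π * (5 * x + Real.sqrt 3 * y) / 3) - sin (2 * π * (5 * x - Real.sqrt 3 * y) / 3)
  + sin (2 * π * (x - 3 * Real.sqrt 3 * y) / 3) - sin (2 * π * (x + 3 * Real.sqrt 3 * y) / 3)
  + sin (4 * π * (2 * x + Real.sqrt 3 * y) / 3) - sin (4 * π * (2 * x - Real.sqrt 3 * y) / 3)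

/-- The first Dirichlet eigenfunction of the equilateral triangle. -/
noncomputable def phi1D (x y : ℝ) : ℝ :=
  2 * sin (2 * π * (x + y / Real.sqrt 3)) - 2 * sin (4 * π * y / Real.sqrt 3)
  - 2 * sin (2 * π * (x - y / Real.sqrt 3))

/-- The open equilateral triangle with vertices `(0,0)`, `(1,0)`, `(1/2, √3/2)`. -/
def openTriangle : Set (ℝ × ℝ) :=
  {p | 0 < p.2 ∧ p.2 < Real.sqrt 3 * p.1 ∧ p.1 + p.2 / Real.sqrt 3 < 1}

/- Write `t = y / √3` and put `A = 2π(x/3 + t)`, `B = 2π(x/3 - t)`, `C = -4πx/3`, so that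
`A + B + C = 0`. Up to a constant `φ₁ᵈ` is the sum of the sines of `A - B`, `B - C`, `C - A`, and
`φ₂ᵈ = φ₁ᵈ (cos A + cos B + cos C)`. Hence
`φ₂ᵈ + φ₁ᵈ = φ₁ᵈ (1 + cos A + cos B + cos C) = 4 φ₁ᵈ cos (A / 2) cos (B / 2) cos (C / 2)`.
As `φ₁ᵈ` does not vanish in the triangle, the nodal set consists of the two segments `x = 3/4` and
`x + √3 y = 3/2`, which meet only at the midpoint `(3/4, √3/4)` of a side and therefore cut the
triangle into three convex pieces. -/

open Function Set

section ConnectedComponents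

variable {X ι : Type*} [TopologicalSpace X] {U : ι → Set X}

theorem isClopen_of_pairwise_disjoint_of_iUnion_eq_univ (hopen : ∀ i, IsOpen (U i))
    (hdisj : Pairwise (Disjoint on U)) (hunion : ⋃ i, U i = univ) (i : ι) : IsClopen (U i) := by
  have hcompl : (U i)ᶜ = ⋃ j ≠ i, U j := by
    ext x
    obtain ⟨j, hj⟩ := iUnion_eq_univ_iff.1 hunion x
    simp only [mem_compl_iff, mem_iUnion, exists_prop]
    refine ⟨fun hi => ⟨j, fun hji => hi (hji ▸ hj), hj⟩, ?_⟩
    rintro ⟨k, hki, hk⟩ hi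
    exact disjoint_left.1 (hdisj hki) hk hi
  refine ⟨⟨?_⟩, hopen i⟩
  rw [hcompl]
  exact isOpen_biUnion fun j _ => hopen j

theorem card_connectedComponents_iUnion (hopen : ∀ i, IsOpen (U i))
    (hconn : ∀ i, IsConnected (U i)) (hdisj : Pairwise (Disjoint on U)) :
    Nat.card (ConnectedComponents (⋃ i, U i)) = Nat.card ι := by
  let V (i : ι) : Set (⋃ i, U i) := Subtype.val ⁻¹' U i
  have hVdisj : Pairwise (Disjoint on V) := fun i j hij => (hdisj hij).preimage _
  have hVunion : ⋃ i, V i = univ := by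
    rw [← preimage_iUnion, Subtype.coe_preimage_self]
  have hVconn (i : ι) : IsConnected (V i) := by
    refine (hconn i).preimage_of_isOpenMap Subtype.val_injective
      (isOpen_iUnion hopen).isOpenMap_subtype_val ?_
    rw [Subtype.range_coe]
    exact subset_iUnion U i
  have hVclopen := isClopen_of_pairwise_disjoint_of_iUnion_eq_univ
    (fun i => (hopen i).preimage continuous_subtype_val) hVdisj hVunion
  exact Nat.card_congr
    (ConnectedComponents.equivOfIsClopenOfIsConnected hVclopen hVdisj hVunion hVconn)

end ConnectedComponents

section ConvexCut

variable {ι E : Type*} [AddCommGroup E] [Module ℝ E] [TopologicalSpace E]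
  {C : Set E} {f : ι → E →L[ℝ] ℝ} {c : ι → ℝ}

/-- The pieces into which the hyperplanes `f i = c i` cut the set `C` when the caps
`{p ∈ C | c i ≤ f i p}` are pairwise disjoint: `some i` is the open cap beyond the `i`-th
hyperplane, and `none` is what remains on the near side of all of them. -/
def cutPiece (C : Set E) (f : ι → E →L[ℝ] ℝ) (c : ι → ℝ) : Option ι → Set E
  | none => C ∩ ⋂ i, f i ⁻¹' Iio (c i)
  | some i => C ∩ f i ⁻¹' Ioi (c i)

theorem mem_cutPiece_none {p : E} : p ∈ cutPiece C f c none ↔ p ∈ C ∧ ∀ i, f i p < c i :=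
  and_congr_right fun _ => mem_iInter

theorem mem_cutPiece_some {p : E} {i : ι} :
    p ∈ cutPiece C f c (some i) ↔ p ∈ C ∧ c i < f i p :=
  Iff.rfl

theorem isOpen_cutPiece [Finite ι] (hC : IsOpen C) (o : Option ι) : IsOpen (cutPiece C f c o) :=
  match o with
  | none => hC.inter (isOpen_iInter_of_finite fun i => isOpen_Iio.preimage (f i).continuous)
  | some i => hC.inter (isOpen_Ioi.preimage (f i).continuous)

theorem convex_cutPiece (hC : Convex ℝ C) (o : Option ι) : Convex ℝ (cutPiece C f c o) :=
  match o with
  | none => hC.inter (convex_iInter fun i => (convex_Iio _).linear_preimage (f i).toLinearMap)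
  | some i => hC.inter ((convex_Ioi _).linear_preimage (f i).toLinearMap)

theorem pairwise_disjoint_cutPiece (hcap : ∀ p ∈ C, {i | c i ≤ f i p}.Subsingleton) :
    Pairwise (Disjoint on cutPiece C f c) := by
  have hnone (i : ι) : Disjoint (cutPiece C f c none) (cutPiece C f c (some i)) :=
    disjoint_left.2 fun p hp hp' =>
      lt_asymm ((mem_cutPiece_none.1 hp).2 i) (mem_cutPiece_some.1 hp').2
  rintro (_ | i) (_ | j) hij
  · exact absurd rfl hij
  · exact hnone j
  · exact (hnone i).symm
  · refine disjoint_left.2 fun p hp hp' => hij (congrArg some ?_)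
    rw [mem_cutPiece_some] at hp hp'
    exact hcap p hp.1 hp.2.le hp'.2.le

theorem iUnion_cutPiece (hcap : ∀ p ∈ C, {i | c i ≤ f i p}.Subsingleton) :
    ⋃ o, cutPiece C f c o = {p ∈ C | ∀ i, f i p ≠ c i} := by
  ext p
  simp only [mem_iUnion, Option.exists, mem_cutPiece_none, mem_cutPiece_some, exists_and_left,
    ← and_or_left, mem_ofPred_eq]
  refine and_congr_right fun hp => ⟨?_, fun hne => ?_⟩
  · rintro (hlt | ⟨i, hi⟩) j
    · exact (hlt j).ne
    · intro hj
      obtain rfl := hcap p hp hi.le hj.ge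
      exact hi.ne' hj
  · by_cases hfar : ∃ i, c i < f i p
    · exact Or.inr hfar
    · push Not at hfar
      exact Or.inl fun i => (hfar i).lt_of_ne (hne i)

theorem card_connectedComponents_convex_diff_hyperplanes [Finite ι] [ContinuousAdd E]
    [ContinuousSMul ℝ E] (hopen : IsOpen C) (hconv : Convex ℝ C)
    (hcap : ∀ p ∈ C, {i | c i ≤ f i p}.Subsingleton)
    (hnear : ∃ p ∈ C, ∀ i, f i p < c i) (hfar : ∀ i, ∃ p ∈ C, c i < f i p) :
    Nat.card (ConnectedComponents {p ∈ C | ∀ i, f i p ≠ c i}) = Nat.card ι + 1 := by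
  have hne : ∀ o, (cutPiece C f c o).Nonempty
    | none => hnear.imp fun _ => mem_cutPiece_none.2
    | some i => (hfar i).imp fun _ => mem_cutPiece_some.2
  rw [← iUnion_cutPiece hcap, card_connectedComponents_iUnion (isOpen_cutPiece hopen)
    (fun o => ⟨hne o, (convex_cutPiece hconv o).isPreconnected⟩) (pairwise_disjoint_cutPiece hcap),
    Finite.card_option]

end ConvexCut

section Trigonometry

variable {a b c : ℝ}

theorem sin_two_mul_add_add_of_add_eq_zero (h : a + b + c = 0) :
    sin (2 * a) + sin (2 * b) + sin (2 * c) = -4 * (sin a * sin b * sin c) := by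
  obtain rfl : c = -(a + b) := by linarith
  calc sin (2 * a) + sin (2 * b) + sin (2 * -(a + b))
      = 2 * sin (a + b) * (cos (a - b) - cos (a + b)) := by
        rw [sin_add_sin, sin_two_mul, sin_neg, cos_neg]; ring_nf
    _ = -4 * (sin a * sin b * sin (-(a + b))) := by
        rw [sin_neg, cos_sub, cos_add]; ring

theorem one_add_cos_two_mul_add_add_of_add_eq_zero (h : a + b + c = 0) :
    1 + cos (2 * a) + cos (2 * b) + cos (2 * c) = 4 * (cos a * cos b * cos c) := by
  obtain rfl : c = -(a + b) := by linarith
  calc 1 + cos (2 * a) + cos (2 * b) + cos (2 * -(a + b))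
      = cos (2 * a) + cos (2 * b) + 2 * cos (a + b) ^ 2 := by
        rw [cos_two_mul (-(a + b)), cos_neg]; ring
    _ = 2 * cos (a + b) * (cos (a - b) + cos (a + b)) := by
        rw [cos_add_cos]; ring_nf
    _ = 4 * (cos a * cos b * cos (-(a + b))) := by
        rw [cos_neg, cos_sub, cos_add]; ring

theorem sin_two_mul_sub_add_sin_sub_two_mul (a b : ℝ) :
    sin (2 * a - b) + sin (a - 2 * b) = 2 * sin (a - b) * (cos a + cos b) - sin a + sin b := by
  have h₁ : sin (2 * a - b) - sin b = 2 * sin (a - b) * cos a := by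
    rw [sin_sub_sin]; ring_nf
  have h₂ : sin (a - 2 * b) + sin a = 2 * sin (a - b) * cos b := by
    rw [sin_add_sin, ← cos_neg b]; ring_nf
  linear_combination h₁ + h₂

theorem sum_sin_sub_mul_sum_cos (a b c : ℝ) :
    2 * (sin (a - b) + sin (b - c) + sin (c - a)) * (cos a + cos b + cos c) =
      (sin (2 * a - b) + sin (a - 2 * b)) + (sin (2 * b - c) + sin (b - 2 * c)) +
        (sin (2 * c - a) + sin (c - 2 * a)) := by
  have hcyclic : sin (a - b) * cos c + sin (b - c) * cos a + sin (c - a) * cos b = 0 := by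
    simp only [sin_sub]; ring
  simp only [sin_two_mul_sub_add_sin_sub_two_mul]
  linear_combination 2 * hcyclic

theorem cos_eq_zero_iff_of_mem_Icc {θ : ℝ} (hθ : θ ∈ Icc 0 π) : cos θ = 0 ↔ θ = π / 2 := by
  rw [← cos_pi_div_two, injOn_cos.eq_iff hθ ⟨by positivity, half_le_self pi_pos.le⟩]

end Trigonometry

section Triangle

theorem sqrt_three_mul (y : ℝ) : √3 * y = 3 * (y / √3) := by
  rw [← mul_div_assoc, mul_div_right_comm, div_sqrt]

theorem mem_openTriangle_iff {x y : ℝ} :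
    (x, y) ∈ openTriangle ↔ 0 < y / √3 ∧ y / √3 < x ∧ x + y / √3 < 1 := by
  have hs : 0 < √3 := by positivity
  rw [div_pos_iff_of_pos_right hs, div_lt_iff₀' hs]
  rfl

theorem mk_sqrt_three_mul_mem_openTriangle {x t : ℝ} (h₁ : 0 < t) (h₂ : t < x) (h₃ : x + t < 1) :
    (x, √3 * t) ∈ openTriangle := by
  rw [mem_openTriangle_iff, mul_div_cancel_left₀ t (by positivity)]
  exact ⟨h₁, h₂, h₃⟩

theorem isOpen_openTriangle : IsOpen openTriangle :=
  (isOpen_lt (by fun_prop) (by fun_prop)).and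
    ((isOpen_lt (by fun_prop) (by fun_prop)).and (isOpen_lt (by fun_prop) (by fun_prop)))

theorem convex_openTriangle : Convex ℝ openTriangle := by
  have hsides : openTriangle = (LinearMap.snd ℝ ℝ ℝ ⁻¹' Ioi 0) ∩
      ((LinearMap.snd ℝ ℝ ℝ - √3 • LinearMap.fst ℝ ℝ ℝ) ⁻¹' Iio 0 ∩
        (LinearMap.fst ℝ ℝ ℝ + (√3)⁻¹ • LinearMap.snd ℝ ℝ ℝ) ⁻¹' Iio 1) := by
    ext p
    simp [openTriangle, div_eq_inv_mul]
  rw [hsides]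
  exact ((convex_Ioi 0).linear_preimage _).inter
    (((convex_Iio 0).linear_preimage _).inter ((convex_Iio 1).linear_preimage _))

end Triangle

section Eigenfunctions

variable {x y : ℝ}

theorem phi1D_eq_prod_sin (x y : ℝ) :
    phi1D x y =
      -8 * (sin (π * (x + y / √3)) * sin (2 * π * (y / √3)) * sin (π * (x - y / √3))) := by
  calc phi1D x y
      = -2 * (sin (2 * -(π * (x + y / √3))) + sin (2 * (2 * π * (y / √3))) +
          sin (2 * (π * (x - y / √3)))) := by
        rw [phi1D, mul_neg, sin_neg]; ring_nf
    _ = -8 * (sin (π * (x + y / √3)) * sin (2 * π * (y / √3)) * sin (π * (x - y / √3))) := by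
        rw [sin_two_mul_add_add_of_add_eq_zero (by ring), sin_neg]; ring

theorem phi2D_eq_phi1D_mul_sum_cos (x y : ℝ) :
    phi2D x y = phi1D x y * (cos (2 * (π * (x / 3 + y / √3))) + cos (2 * (π * (x / 3 - y / √3))) +
      cos (2 * -(π * (2 * x / 3)))) := by
  set A := 2 * (π * (x / 3 + y / √3)) with hA
  set B := 2 * (π * (x / 3 - y / √3)) with hB
  set C := 2 * -(π * (2 * x / 3)) with hC
  have hphi1D : phi1D x y = -2 * (sin (A - B) + sin (B - C) + sin (C - A)) := by
    have hAB : A - B = 4 * π * y / √3 := by rw [hA, hB]; ring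
    have hBC : B - C = 2 * π * (x - y / √3) := by rw [hB, hC]; ring
    have hCA : C - A = -(2 * π * (x + y / √3)) := by rw [hC, hA]; ring
    rw [hAB, hBC, hCA, sin_neg, phi1D]
    ring
  have hphi2D : phi2D x y =
      -((sin (2 * A - B) + sin (A - 2 * B)) + (sin (2 * B - C) + sin (B - 2 * C)) +
        (sin (2 * C - A) + sin (C - 2 * A))) := by
    have hAAB : 2 * A - B = 2 * π * (x + 3 * √3 * y) / 3 := by
      rw [mul_assoc 3, sqrt_three_mul, hA, hB]; ring
    have hABB : A - 2 * B = -(2 * π * (x - 3 * √3 * y) / 3) := by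
      rw [mul_assoc 3, sqrt_three_mul, hA, hB]; ring
    have hBBC : 2 * B - C = 4 * π * (2 * x - √3 * y) / 3 := by
      rw [sqrt_three_mul, hB, hC]; ring
    have hBCC : B - 2 * C = 2 * π * (5 * x - √3 * y) / 3 := by
      rw [sqrt_three_mul, hB, hC]; ring
    have hCCA : 2 * C - A = -(2 * π * (5 * x + √3 * y) / 3) := by
      rw [sqrt_three_mul, hC, hA]; ring
    have hCAA : C - 2 * A = -(4 * π * (2 * x + √3 * y) / 3) := by
      rw [sqrt_three_mul, hC, hA]; ring
    rw [hAAB, hABB, hBBC, hBCC, hCCA, hCAA, sin_neg, sin_neg, sin_neg, phi2D]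
    ring
  rw [hphi1D, hphi2D]
  linear_combination sum_sin_sub_mul_sum_cos A B C

theorem phi2D_add_phi1D (x y : ℝ) :
    phi2D x y + phi1D x y = 4 * phi1D x y *
      (cos (π * (x / 3 + y / √3)) * cos (π * (x / 3 - y / √3)) * cos (π * (2 * x / 3))) := by
  have h := one_add_cos_two_mul_add_add_of_add_eq_zero
    (show π * (x / 3 + y / √3) + π * (x / 3 - y / √3) + -(π * (2 * x / 3)) = 0 by ring)
  rw [cos_neg] at h
  rw [phi2D_eq_phi1D_mul_sum_cos]
  linear_combination phi1D x y * h

theorem phi1D_neg (hp : (x, y) ∈ openTriangle) : phi1D x y < 0 := by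
  obtain ⟨h₁, h₂, h₃⟩ := mem_openTriangle_iff.1 hp
  rw [phi1D_eq_prod_sin]
  generalize y / √3 = t at *
  have hsin {s : ℝ} (hs₀ : 0 < s) (hs₁ : s < 1) : 0 < sin (π * s) :=
    sin_pos_of_pos_of_lt_pi (by positivity) (by nlinarith [pi_pos])
  have hplus : 0 < sin (π * (x + t)) := hsin (by linarith) h₃
  have htwo : 0 < sin (2 * π * t) := by
    rw [mul_comm 2 π, mul_assoc]
    exact hsin (by linarith) (by linarith)
  have hminus : 0 < sin (π * (x - t)) := hsin (by linarith) (by linarith)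
  have := mul_pos (mul_pos hplus htwo) hminus
  linarith

theorem phi2D_add_phi1D_eq_zero_iff (hp : (x, y) ∈ openTriangle) :
    phi2D x y + phi1D x y = 0 ↔ x = 3 / 4 ∨ x + √3 * y = 3 / 2 := by
  have hφ := (phi1D_neg hp).ne
  obtain ⟨h₁, h₂, h₃⟩ := mem_openTriangle_iff.1 hp
  rw [phi2D_add_phi1D, sqrt_three_mul]
  generalize y / √3 = t at *
  have hcos {s : ℝ} (hs₀ : 0 ≤ s) (hs₁ : s ≤ 1) : cos (π * s) = 0 ↔ s = 1 / 2 := by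
    rw [cos_eq_zero_iff_of_mem_Icc ⟨by positivity, by nlinarith [pi_pos]⟩, ← mul_one_div,
      mul_right_inj' pi_ne_zero]
  have hpos : 0 < cos (π * (x / 3 - t)) :=
    cos_pos_of_mem_Ioo ⟨by nlinarith [pi_pos], by nlinarith [pi_pos]⟩
  have hplus : cos (π * (x / 3 + t)) = 0 ↔ x + 3 * t = 3 / 2 := by
    rw [hcos (by linarith) (by linarith)]
    constructor <;> intro h <;> linarith
  have hvert : cos (π * (2 * x / 3)) = 0 ↔ x = 3 / 4 := by
    rw [hcos (by linarith) (by linarith)]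
    constructor <;> intro h <;> linarith
  simp only [mul_eq_zero, OfNat.ofNat_ne_zero, hφ, hpos.ne', hplus, hvert, false_or, or_false,
    or_comm]

end Eigenfunctions

section NodalDomains

/-- The linear functionals whose level lines at `nodalLevel` carry the nodal set of
`phi2D + phi1D`. Both lines pass through the midpoint `(3/4, √3/4)` of a side of the triangle. -/
noncomputable def nodalFunctional : Fin 2 → ℝ × ℝ →L[ℝ] ℝ :=
  ![.fst ℝ ℝ ℝ, .fst ℝ ℝ ℝ + √3 • .snd ℝ ℝ ℝ]

/-- The levels of `nodalFunctional` that carry the nodal set of `phi2D + phi1D`. -/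
noncomputable def nodalLevel : Fin 2 → ℝ :=
  ![3 / 4, 3 / 2]

theorem setOf_phi2D_add_phi1D_ne_zero :
    {p ∈ openTriangle | phi2D p.1 p.2 + phi1D p.1 p.2 ≠ 0} =
      {p ∈ openTriangle | ∀ i, nodalFunctional i p ≠ nodalLevel i} := by
  ext p
  refine and_congr_right fun hp => ?_
  rw [Ne, phi2D_add_phi1D_eq_zero_iff hp, not_or, Fin.forall_fin_two]
  rfl

theorem subsingleton_setOf_nodalLevel_le {p : ℝ × ℝ} (hp : p ∈ openTriangle) :
    {i | nodalLevel i ≤ nodalFunctional i p}.Subsingleton := by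
  obtain ⟨-, -, hp⟩ := mem_openTriangle_iff.1 hp
  have hcap : ¬(3 / 4 ≤ p.1 ∧ 3 / 2 ≤ p.1 + √3 * p.2) := by
    rintro ⟨h₁, h₂⟩
    rw [sqrt_three_mul] at h₂
    linarith
  intro i hi j hj
  by_contra hij
  refine hcap ?_
  fin_cases i <;> fin_cases j
  exacts [absurd rfl hij, ⟨hi, hj⟩, ⟨hj, hi⟩, absurd rfl hij]

theorem nodalFunctional_one_sqrt_three_mul (x t : ℝ) :
    nodalFunctional 1 (x, √3 * t) = x + 3 * t := by
  change x + √3 * (√3 * t) = x + 3 * t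
  rw [← mul_assoc, mul_self_sqrt zero_le_three]

theorem exists_mem_openTriangle_nodalFunctional_lt :
    ∃ p ∈ openTriangle, ∀ i, nodalFunctional i p < nodalLevel i := by
  refine ⟨(1 / 2, √3 * (1 / 10)),
    mk_sqrt_three_mul_mem_openTriangle (by norm_num) (by norm_num) (by norm_num), ?_⟩
  rw [Fin.forall_fin_two, nodalFunctional_one_sqrt_three_mul]
  constructor <;> norm_num [nodalFunctional, nodalLevel]

theorem exists_mem_openTriangle_nodalLevel_lt (i : Fin 2) :
    ∃ p ∈ openTriangle, nodalLevel i < nodalFunctional i p := by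
  revert i
  refine Fin.forall_fin_two.2
    ⟨⟨(4 / 5, √3 * (1 / 10)),
      mk_sqrt_three_mul_mem_openTriangle (by norm_num) (by norm_num) (by norm_num), ?_⟩,
    ⟨(1 / 2, √3 * (2 / 5)),
      mk_sqrt_three_mul_mem_openTriangle (by norm_num) (by norm_num) (by norm_num), ?_⟩⟩
  · norm_num [nodalFunctional, nodalLevel]
  · rw [nodalFunctional_one_sqrt_three_mul]
    norm_num [nodalLevel]

end NodalDomains

/-- The linear combination `φ₂ᵈ + φ₁ᵈ` of the first two Dirichlet eigenfunctions of the
equilateral triangle has exactly `3` nodal domains, contradicting the Extended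
Courant Property (the Courant bound is `κ = 2`). -/
theorem three_nodal_domains_phi2D_plus_phi1D :
    Nat.card (ConnectedComponents
      ↥{p ∈ openTriangle | phi2D p.1 p.2 + phi1D p.1 p.2 ≠ 0}) = 3 := by
  rw [setOf_phi2D_add_phi1D_ne_zero,
    card_connectedComponents_convex_diff_hyperplanes isOpen_openTriangle convex_openTriangle
      (fun _ => subsingleton_setOf_nodalLevel_le) exists_mem_openTriangle_nodalFunctional_lt
      exists_mem_openTriangle_nodalLevel_lt, Nat.card_fin]
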